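/- Let E be a finite type and ι a nonempty finite index type, and for each i ∈ ι let v i ∈ (ZMod 2)^E be the indicator vector of a subset f i ⊆ E. Suppose every e ∈ E belongs to exactly two of the sets f i, and suppose the graph on ι in which i and j (i ≠ j) are adjacent whenever f i ∩ f j ≠ ∅ is connected. Then for any coefficients c : ι → ZMod 2, the linear combination ∑_i c i • v i equals zero if and only if c is constant. In particular the span of {v i} over ZMod 2 has dimension |ι| − 1. -/

import Mathlib

/-- If every element of `E` lies in exactly two of the sets `f i` and the adjacency
graph on `ι` (where `i ≠ j` are adjacent iff `f i ∩ f j ≠ ∅`) is connected, then a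
`ZMod 2` linear combination of the indicator vectors vanishes iff the coefficients
are constant; in particular the span of the indicator vectors has dimension `|ι| - 1`. -/
theorem indicator_unique_dependency {E ι : Type*} [Fintype E] [Fintype ι]
    [DecidableEq E] [Nonempty ι]
    (f : ι → Finset E) (v : ι → E → ZMod 2)
    (hv : ∀ i e, v i e = if e ∈ f i then 1 else 0)
    (h2 : ∀ e : E, (Finset.univ.filter (fun i => e ∈ f i)).card = 2)
    (hconn : (SimpleGraph.fromRel (fun i j => ((f i) ∩ (f j)).Nonempty)).Connected) :
    (∀ c : ι → ZMod 2, (∑ i, c i • v i) = 0 ↔ ∀ i j, c i = c j) ∧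
    Module.finrank (ZMod 2) (Submodule.span (ZMod 2) (Set.range v)) =
      Fintype.card ι - 1 := by
  classical
  have key : ∀ (c : ι → ZMod 2) (e : E),
      (∑ i, c i • v i) e = ∑ i ∈ Finset.univ.filter (fun i => e ∈ f i), c i := by
    intro c e
    simp [Finset.sum_apply, hv, Finset.sum_filter]
  have main : ∀ c : ι → ZMod 2, (∑ i, c i • v i) = 0 ↔ ∀ i j, c i = c j := by
    intro c
    constructor
    · intro h
      have hadj : ∀ i j, i ≠ j → (f i ∩ f j).Nonempty → c i = c j := by
        rintro i j hij ⟨e, he⟩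
        rw [Finset.mem_inter] at he
        have hs : ({i, j} : Finset ι) = Finset.univ.filter (fun i => e ∈ f i) := by
          apply Finset.eq_of_subset_of_card_le
          · intro k hk
            simp only [Finset.mem_insert, Finset.mem_singleton] at hk
            rcases hk with rfl | rfl <;> simp [he]
          · rw [h2 e, Finset.card_pair hij]
        have hk := key c e
        rw [h, ← hs, Finset.sum_pair hij] at hk
        exact CharTwo.add_eq_zero.mp hk.symm
      intro i j
      obtain ⟨w⟩ := hconn.preconnected i j
      induction w with
      | nil => rfl
      | cons hab _ ih =>
        rw [SimpleGraph.fromRel_adj] at hab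
        refine Eq.trans ?_ ih
        rcases hab with ⟨hne, h1 | h1⟩
        · exact hadj _ _ hne h1
        · exact (hadj _ _ hne.symm h1).symm
    · intro h
      funext e
      rw [key]
      obtain ⟨a, b, hab, hs⟩ := Finset.card_eq_two.mp (h2 e)
      rw [hs, Finset.sum_pair hab, h a b]
      exact CharTwo.add_self_eq_zero _
  refine ⟨main, ?_⟩
  have hker : LinearMap.ker (Fintype.linearCombination (ZMod 2) v)
      = Submodule.span (ZMod 2) {(fun _ => 1 : ι → ZMod 2)} := by
    ext c
    rw [LinearMap.mem_ker, Fintype.linearCombination_apply, main,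
      Submodule.mem_span_singleton]
    constructor
    · intro h
      obtain ⟨i0⟩ := ‹Nonempty ι›
      exact ⟨c i0, by funext j; simp [h i0 j]⟩
    · rintro ⟨a, rfl⟩ i j
      rfl
  have hne : (fun _ => 1 : ι → ZMod 2) ≠ 0 := by
    obtain ⟨i0⟩ := ‹Nonempty ι›
    intro h
    exact one_ne_zero (congrFun h i0)
  have hrn := LinearMap.finrank_range_add_finrank_ker (Fintype.linearCombination (ZMod 2) v)
  rw [hker, finrank_span_singleton hne, Fintype.range_linearCombination,
    Module.finrank_fintype_fun_eq_card] at hrn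
  omega
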